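/- For every α with 0 ≤ α < 2 there exists a constant C_α > 0, depending only on α, such that the following holds: for every δ > 0 and every measurable set E ⊆ ℝ² contained in the open disk of radius δ centered at the origin, the function C(a) := ∫_E (y₁−a)/((a−y₁)² + y₂²)^{1+α/2} dy₁ dy₂ is twice differentiable on (δ, ∞) and satisfies |C″(a)| ≤ C_α δ² / a^{3+α} for every a ≥ 2δ. -/

import Mathlib

open MeasureTheory Real

/-!
The integral `C a` is the potential at `(a, 0)` of Lebesgue measure on `E` for the kernel
`k z = -z.1 / |z| ^ (2 * p)`, where `p = 1 + α / 2`. Since `k` is smooth away from the origin, one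
may differentiate twice under the integral sign when `(a, 0)` lies outside the closed disk. The
second derivative of `k` is homogeneous of degree `-(3 + α)`, hence at most a constant times
`|z| ^ (-(3 + α))`; for `y ∈ E` and `a ≥ 2 * δ` the distance from `(a, 0)` to `y` is comparable
to `a`, and `E` has area at most `4 * δ ^ 2`.
-/

open Filter Topology Set Function

theorem hasDerivAt_integral_of_isCompact {Y F : Type*} [TopologicalSpace Y] [T2Space Y]
    [MeasurableSpace Y] [OpensMeasurableSpace Y]
    [NormedAddCommGroup F] [NormedSpace ℝ F] {μ : Measure Y} [IsFiniteMeasure μ] {K : Set Y}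
    (hK : IsCompact K) (hμ : ∀ᵐ y ∂μ, y ∈ K) {U : Set ℝ} {f f' : ℝ → Y → F} {a : ℝ}
    (hU : U ∈ 𝓝 a) (hf : ∀ b ∈ U, ContinuousOn (f b) K)
    (hf' : ContinuousOn (uncurry f') (U ×ˢ K))
    (hderiv : ∀ b ∈ U, ∀ y ∈ K, HasDerivAt (f · y) (f' b y) b) :
    HasDerivAt (fun b ↦ ∫ y, f b y ∂μ) (∫ y, f' a y ∂μ) a := by
  have hμK : μ.restrict K = μ := Measure.restrict_eq_self_of_ae_mem hμ
  have hmeas {g : Y → F} (hg : ContinuousOn g K) : AEStronglyMeasurable g μ :=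
    hμK ▸ hg.aestronglyMeasurable_of_isCompact hK hK.measurableSet
  have ha : a ∈ U := mem_of_mem_nhds hU
  obtain ⟨L, hL, hLU, hLcompact⟩ := local_compact_nhds hU
  obtain ⟨M, hM⟩ := (hLcompact.prod hK).exists_bound_of_continuousOn
    (hf'.mono (prod_mono hLU subset_rfl))
  have hfint : Integrable (f a) μ := hμK ▸ (hf a ha).integrableOn_compact hK
  have hf'a : ContinuousOn (f' a) K := hf'.comp (f := (a, ·)) (by fun_prop) fun y hy ↦ ⟨ha, hy⟩
  refine (hasDerivAt_integral_of_dominated_loc_of_deriv_le hL ?_ hfint (hmeas hf'a)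
    (hμ.mono fun y hy b hb ↦ hM (b, y) ⟨hb, hy⟩) (integrable_const M)
    (hμ.mono fun y hy b hb ↦ hderiv b (hLU hb) y hy)).2
  filter_upwards [hU] with b hb using hmeas (hf b hb)

theorem rpow_le_rpow_abs_mul_rpow {c x y : ℝ} (hc : 0 < c) (hx : 0 < x) (hxy : x / c ≤ y)
    (hyx : y ≤ c * x) (s : ℝ) : y ^ s ≤ c ^ |s| * x ^ s := by
  rcases le_total 0 s with hs | hs
  · rw [abs_of_nonneg hs, ← mul_rpow hc.le hx.le]
    exact rpow_le_rpow ((div_pos hx hc).le.trans hxy) hyx hs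
  · calc y ^ s ≤ (x / c) ^ s := rpow_le_rpow_of_nonpos (div_pos hx hc) hxy hs
      _ = c ^ |s| * x ^ s := by
        rw [abs_of_nonpos hs, div_rpow hx.le hc.le, rpow_neg hc.le, div_eq_inv_mul]

/-- The Euclidean closed disk of radius `δ` about the origin. (`Metric.closedBall` in `ℝ × ℝ` is a
square, since the norm of a product is the maximum.) -/
def closedDisk (δ : ℝ) : Set (ℝ × ℝ) := {y | y.1 ^ 2 + y.2 ^ 2 ≤ δ ^ 2}

section ClosedDisk

variable {δ : ℝ}

lemma closedDisk_subset_Icc (hδ : 0 ≤ δ) : closedDisk δ ⊆ Icc (-δ) δ ×ˢ Icc (-δ) δ := by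
  intro y (hy : y.1 ^ 2 + y.2 ^ 2 ≤ δ ^ 2)
  exact ⟨abs_le_of_sq_le_sq' (by linarith [sq_nonneg y.2]) hδ,
    abs_le_of_sq_le_sq' (by linarith [sq_nonneg y.1]) hδ⟩

lemma isClosed_closedDisk : IsClosed (closedDisk δ) :=
  isClosed_le (by fun_prop) continuous_const

lemma isCompact_closedDisk (hδ : 0 ≤ δ) : IsCompact (closedDisk δ) :=
  (isCompact_Icc.prod isCompact_Icc).of_isClosed_subset isClosed_closedDisk
    (closedDisk_subset_Icc hδ)

lemma volume_closedDisk_le (hδ : 0 ≤ δ) :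
    volume (closedDisk δ) ≤ ENNReal.ofReal (4 * δ ^ 2) := by
  calc volume (closedDisk δ) ≤ volume (Icc (-δ) δ ×ˢ Icc (-δ) δ) :=
        measure_mono (closedDisk_subset_Icc hδ)
    _ = ENNReal.ofReal (4 * δ ^ 2) := by
      rw [Measure.volume_eq_prod, Measure.prod_prod, Real.volume_Icc,
        ← ENNReal.ofReal_mul (by linarith)]
      ring_nf

lemma notMem_closedDisk_of_lt {a : ℝ} (hδ : 0 ≤ δ) (ha : δ < a) : (a, 0) ∉ closedDisk δ :=
  fun h ↦ ha.not_ge (closedDisk_subset_Icc hδ h).1.2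

lemma div_four_le_sq_dist_of_mem_closedDisk {a : ℝ} {y : ℝ × ℝ} (hδ : 0 ≤ δ) (ha : 2 * δ ≤ a)
    (hy : y ∈ closedDisk δ) : a ^ 2 / 4 ≤ (a - y.1) ^ 2 + y.2 ^ 2 := by
  have hy₁ : y.1 ≤ δ := (closedDisk_subset_Icc hδ hy).1.2
  nlinarith [sq_nonneg y.2]

lemma sq_dist_le_four_mul_of_mem_closedDisk {a : ℝ} {y : ℝ × ℝ} (hδ : 0 ≤ δ) (ha : 2 * δ ≤ a)
    (hy : y ∈ closedDisk δ) : (a - y.1) ^ 2 + y.2 ^ 2 ≤ 4 * a ^ 2 := by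
  have hy₁ : -δ ≤ y.1 := (closedDisk_subset_Icc hδ hy).1.1
  have hy_sq : y.1 ^ 2 + y.2 ^ 2 ≤ δ ^ 2 := hy
  nlinarith

end ClosedDisk

/-- The potential of the measure `μ` for the convolution kernel `k`, restricted to the first
coordinate axis; the integral in the theorem has this form. -/
noncomputable def axisPotential (k : ℝ × ℝ → ℝ) (μ : Measure (ℝ × ℝ)) (b : ℝ) : ℝ :=
  ∫ y, k ((b, 0) - y) ∂μ

section AxisPotential

variable {μ : Measure (ℝ × ℝ)} [IsFiniteMeasure μ] {K : Set (ℝ × ℝ)}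

lemma eventually_prodMk_zero_notMem (hK : IsClosed K) {a : ℝ} (ha : (a, 0) ∉ K) :
    ∀ᶠ b in 𝓝 a, (b, (0 : ℝ)) ∉ K :=
  (hK.isOpen_compl.preimage (Continuous.prodMk_left 0)).mem_nhds ha

theorem hasDerivAt_axisPotential {k k' : ℝ × ℝ → ℝ} (hk : ContinuousOn k {0}ᶜ)
    (hk' : ContinuousOn k' {0}ᶜ)
    (hderiv : ∀ z ≠ 0, HasDerivAt (fun x ↦ k (x, z.2)) (k' z) z.1)
    (hK : IsCompact K) (hμ : ∀ᵐ y ∂μ, y ∈ K) {a : ℝ} (ha : (a, 0) ∉ K) :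
    HasDerivAt (axisPotential k μ) (axisPotential k' μ a) a := by
  have hne {b : ℝ} {y : ℝ × ℝ} (hb : (b, 0) ∉ K) (hy : y ∈ K) : (b, 0) - y ≠ 0 :=
    sub_ne_zero.2 fun h ↦ hb (h ▸ hy)
  refine hasDerivAt_integral_of_isCompact (f := fun b y ↦ k ((b, 0) - y))
    (f' := fun b y ↦ k' ((b, 0) - y)) hK hμ (eventually_prodMk_zero_notMem hK.isClosed ha)
    (fun b hb ↦ ?_) ?_ fun b hb y hy ↦ ?_
  · exact hk.comp (by fun_prop) fun y hy ↦ hne hb hy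
  · exact hk'.comp (f := fun q : ℝ × ℝ × ℝ ↦ (q.1, 0) - q.2) (by fun_prop)
      fun q hq ↦ hne hq.1 hq.2
  · exact (hderiv _ (hne hb hy)).comp_sub_const b y.1

end AxisPotential

/-- The first component of `-z / |z| ^ (2 * p)`, where `|z|` is the Euclidean norm: the kernel whose
potential on the axis is to be differentiated. -/
noncomputable def axialKernel (p : ℝ) (z : ℝ × ℝ) : ℝ :=
  -z.1 * (z.1 ^ 2 + z.2 ^ 2) ^ (-p)

/-- The partial derivative of `axialKernel p` in the first coordinate, away from the origin; its
potential is the derivative of that of `axialKernel p`. -/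
noncomputable def axialKernelDeriv (p : ℝ) (z : ℝ × ℝ) : ℝ :=
  -(z.1 ^ 2 + z.2 ^ 2) ^ (-p) + 2 * p * (z.1 ^ 2 * (z.1 ^ 2 + z.2 ^ 2) ^ (-p - 1))

/-- The second partial derivative of `axialKernel p` in the first coordinate, away from the origin;
its potential is the second derivative of that of `axialKernel p`. -/
noncomputable def axialKernelDeriv₂ (p : ℝ) (z : ℝ × ℝ) : ℝ :=
  6 * p * (z.1 * (z.1 ^ 2 + z.2 ^ 2) ^ (-p - 1)) -
    4 * p * (p + 1) * (z.1 ^ 3 * (z.1 ^ 2 + z.2 ^ 2) ^ (-p - 2))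

section AxialKernel

variable {z : ℝ × ℝ}

lemma fst_sq_add_snd_sq_pos (hz : z ≠ 0) : 0 < z.1 ^ 2 + z.2 ^ 2 := by
  contrapose! hz
  have h₁ : z.1 ^ 2 = 0 := by linarith [sq_nonneg z.1, sq_nonneg z.2]
  have h₂ : z.2 ^ 2 = 0 := by linarith [sq_nonneg z.1, sq_nonneg z.2]
  exact Prod.ext (pow_eq_zero_iff two_ne_zero |>.1 h₁) (pow_eq_zero_iff two_ne_zero |>.1 h₂)

lemma continuousOn_fst_sq_add_snd_sq_rpow (q : ℝ) :
    ContinuousOn (fun z : ℝ × ℝ ↦ (z.1 ^ 2 + z.2 ^ 2) ^ q) {0}ᶜ :=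
  ContinuousOn.rpow_const (by fun_prop) fun _ hz ↦ Or.inl (fst_sq_add_snd_sq_pos hz).ne'

lemma hasDerivAt_fst_sq_add_snd_sq_rpow (q : ℝ) (hz : z ≠ 0) :
    HasDerivAt (fun x ↦ (x ^ 2 + z.2 ^ 2) ^ q)
      (2 * q * (z.1 * (z.1 ^ 2 + z.2 ^ 2) ^ (q - 1))) z.1 := by
  have h := ((hasDerivAt_pow 2 z.1).add_const (z.2 ^ 2)).rpow_const (p := q)
    (Or.inl (fst_sq_add_snd_sq_pos hz).ne')
  exact h.congr_deriv (by push_cast; ring)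

lemma abs_fst_pow_mul_rpow_le (j : ℕ) (q : ℝ) (hz : z ≠ 0) :
    |z.1| ^ j * (z.1 ^ 2 + z.2 ^ 2) ^ q ≤ (z.1 ^ 2 + z.2 ^ 2) ^ (q + j / 2) := by
  have hpos := fst_sq_add_snd_sq_pos hz
  have hfst : |z.1| ≤ √(z.1 ^ 2 + z.2 ^ 2) := abs_le_sqrt (by linarith [sq_nonneg z.2])
  calc |z.1| ^ j * (z.1 ^ 2 + z.2 ^ 2) ^ q
      ≤ √(z.1 ^ 2 + z.2 ^ 2) ^ j * (z.1 ^ 2 + z.2 ^ 2) ^ q := by gcongr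
    _ = (z.1 ^ 2 + z.2 ^ 2) ^ (q + j / 2) := by
      rw [sqrt_eq_rpow, ← rpow_mul_natCast hpos.le, ← rpow_add hpos]
      ring_nf

lemma axialKernel_sub (p b : ℝ) (y : ℝ × ℝ) :
    axialKernel p ((b, 0) - y) = (y.1 - b) / ((b - y.1) ^ 2 + y.2 ^ 2) ^ p := by
  simp [axialKernel, rpow_neg (add_nonneg (sq_nonneg _) (sq_nonneg _)), div_eq_mul_inv]

lemma continuousOn_axialKernel (p : ℝ) : ContinuousOn (axialKernel p) {0}ᶜ :=
  continuousOn_fst.neg.mul (continuousOn_fst_sq_add_snd_sq_rpow _)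

lemma continuousOn_axialKernelDeriv (p : ℝ) : ContinuousOn (axialKernelDeriv p) {0}ᶜ :=
  (continuousOn_fst_sq_add_snd_sq_rpow _).neg.add <| continuousOn_const.mul <|
    (continuousOn_fst.pow 2).mul (continuousOn_fst_sq_add_snd_sq_rpow _)

lemma continuousOn_axialKernelDeriv₂ (p : ℝ) : ContinuousOn (axialKernelDeriv₂ p) {0}ᶜ :=
  (continuousOn_const.mul (continuousOn_fst.mul (continuousOn_fst_sq_add_snd_sq_rpow _))).sub <|
    continuousOn_const.mul ((continuousOn_fst.pow 3).mul (continuousOn_fst_sq_add_snd_sq_rpow _))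

lemma hasDerivAt_axialKernel (p : ℝ) (hz : z ≠ 0) :
    HasDerivAt (fun x ↦ axialKernel p (x, z.2)) (axialKernelDeriv p z) z.1 := by
  have h := (hasDerivAt_id z.1).neg.mul (hasDerivAt_fst_sq_add_snd_sq_rpow (-p) hz)
  exact h.congr_deriv (by simp only [axialKernelDeriv, Pi.neg_apply, id_eq]; ring)

lemma hasDerivAt_axialKernelDeriv (p : ℝ) (hz : z ≠ 0) :
    HasDerivAt (fun x ↦ axialKernelDeriv p (x, z.2)) (axialKernelDeriv₂ p z) z.1 := by
  have h := (hasDerivAt_fst_sq_add_snd_sq_rpow (-p) hz).neg.add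
    (((hasDerivAt_pow 2 z.1).mul
      (hasDerivAt_fst_sq_add_snd_sq_rpow (-p - 1) hz)).const_mul (2 * p))
  refine h.congr_deriv ?_
  rw [axialKernelDeriv₂, show -p - 1 - 1 = -p - 2 by ring]
  push_cast
  ring

lemma abs_axialKernelDeriv₂_le (p : ℝ) (hz : z ≠ 0) :
    |axialKernelDeriv₂ p z| ≤ 6 * (|p| + 1) ^ 2 * (z.1 ^ 2 + z.2 ^ 2) ^ (-p - 1 / 2) := by
  set Q := z.1 ^ 2 + z.2 ^ 2
  have hQ0 : 0 < Q := fst_sq_add_snd_sq_pos hz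
  have h₁ : |z.1 * Q ^ (-p - 1)| ≤ Q ^ (-p - 1 / 2) := by
    have h := abs_fst_pow_mul_rpow_le 1 (-p - 1) hz
    rw [abs_mul, abs_of_pos (rpow_pos_of_pos hQ0 _)]
    convert h using 2
    · rw [pow_one]
    · push_cast
      ring
  have h₃ : |z.1 ^ 3 * Q ^ (-p - 2)| ≤ Q ^ (-p - 1 / 2) := by
    have h := abs_fst_pow_mul_rpow_le 3 (-p - 2) hz
    rw [abs_mul, abs_pow, abs_of_pos (rpow_pos_of_pos hQ0 _)]
    convert h using 2
    push_cast
    ring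
  have hp : |p + 1| ≤ |p| + 1 := by simpa using abs_add_le p 1
  calc |axialKernelDeriv₂ p z|
      ≤ |6 * p * (z.1 * Q ^ (-p - 1))| + |4 * p * (p + 1) * (z.1 ^ 3 * Q ^ (-p - 2))| :=
        abs_sub _ _
    _ = 6 * |p| * |z.1 * Q ^ (-p - 1)| + 4 * |p| * |p + 1| * |z.1 ^ 3 * Q ^ (-p - 2)| := by
        simp only [abs_mul, Nat.abs_ofNat]
    _ ≤ 6 * |p| * Q ^ (-p - 1 / 2) + 4 * |p| * (|p| + 1) * Q ^ (-p - 1 / 2) := by gcongr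
    _ = (6 * |p| + 4 * |p| * (|p| + 1)) * Q ^ (-p - 1 / 2) := by ring
    _ ≤ 6 * (|p| + 1) ^ 2 * Q ^ (-p - 1 / 2) := by
        gcongr
        nlinarith [abs_nonneg p]

end AxialKernel

section AxialPotential

variable {μ : Measure (ℝ × ℝ)} [IsFiniteMeasure μ] {a : ℝ}

theorem hasDerivAt_axisPotential_axialKernel (p : ℝ) {K : Set (ℝ × ℝ)} (hK : IsCompact K)
    (hμ : ∀ᵐ y ∂μ, y ∈ K) (ha : (a, 0) ∉ K) :
    HasDerivAt (axisPotential (axialKernel p) μ) (axisPotential (axialKernelDeriv p) μ a) a :=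
  hasDerivAt_axisPotential (continuousOn_axialKernel p) (continuousOn_axialKernelDeriv p)
    (fun _ ↦ hasDerivAt_axialKernel p) hK hμ ha

theorem hasDerivAt_deriv_axisPotential_axialKernel (p : ℝ) {K : Set (ℝ × ℝ)}
    (hK : IsCompact K) (hμ : ∀ᵐ y ∂μ, y ∈ K) (ha : (a, 0) ∉ K) :
    HasDerivAt (deriv (axisPotential (axialKernel p) μ))
      (axisPotential (axialKernelDeriv₂ p) μ a) a := by
  refine (hasDerivAt_axisPotential (continuousOn_axialKernelDeriv p)
    (continuousOn_axialKernelDeriv₂ p) (fun _ ↦ hasDerivAt_axialKernelDeriv p) hK hμ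
    ha).congr_of_eventuallyEq ?_
  filter_upwards [eventually_prodMk_zero_notMem hK.isClosed ha] with b hb using
    (hasDerivAt_axisPotential_axialKernel p hK hμ hb).deriv

theorem abs_deriv_deriv_axisPotential_axialKernel_le (p : ℝ) {δ : ℝ} (hδ : 0 < δ)
    (hμ : ∀ᵐ y ∂μ, y ∈ closedDisk δ) (ha : 2 * δ ≤ a) :
    |deriv (deriv (axisPotential (axialKernel p) μ)) a| ≤
      6 * (|p| + 1) ^ 2 * 4 ^ |-p - 1 / 2| * μ.real univ / a ^ (2 * p + 1) := by
  have ha0 : 0 < a := by linarith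
  have haδ : (a, 0) ∉ closedDisk δ := notMem_closedDisk_of_lt hδ.le (by linarith)
  have hK := isCompact_closedDisk hδ.le
  have hbound : ∀ y ∈ closedDisk δ, |axialKernelDeriv₂ p ((a, 0) - y)| ≤
      6 * (|p| + 1) ^ 2 * (4 ^ |-p - 1 / 2| * (a ^ 2) ^ (-p - 1 / 2)) := by
    intro y hy
    have hne : (a, 0) - y ≠ 0 := sub_ne_zero.2 fun h ↦ haδ (h ▸ hy)
    refine (abs_axialKernelDeriv₂_le p hne).trans ?_
    gcongr
    refine rpow_le_rpow_abs_mul_rpow (by norm_num) (by positivity) ?_ ?_ _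
    · simpa using div_four_le_sq_dist_of_mem_closedDisk hδ.le ha hy
    · simpa using sq_dist_le_four_mul_of_mem_closedDisk hδ.le ha hy
  have hpow : (a ^ 2) ^ (-p - 1 / 2) = (a ^ (2 * p + 1))⁻¹ := by
    rw [← rpow_natCast_mul ha0.le, ← rpow_neg ha0.le]
    push_cast
    ring_nf
  calc |deriv (deriv (axisPotential (axialKernel p) μ)) a|
      = |axisPotential (axialKernelDeriv₂ p) μ a| := by
        rw [(hasDerivAt_deriv_axisPotential_axialKernel p hK hμ haδ).deriv]
    _ ≤ 6 * (|p| + 1) ^ 2 * (4 ^ |-p - 1 / 2| * (a ^ 2) ^ (-p - 1 / 2)) * μ.real univ :=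
        norm_integral_le_of_norm_le_const (f := fun y ↦ axialKernelDeriv₂ p ((a, 0) - y))
          (hμ.mono hbound)
    _ = 6 * (|p| + 1) ^ 2 * 4 ^ |-p - 1 / 2| * μ.real univ / a ^ (2 * p + 1) := by
        rw [hpow, div_eq_mul_inv]
        ring

end AxialPotential

theorem stmt12_general (α : ℝ) :
    ∃ Cα : ℝ, 0 < Cα ∧ ∀ δ : ℝ, 0 < δ → ∀ E : Set (ℝ × ℝ),
      E ⊆ {y : ℝ × ℝ | y.1 ^ 2 + y.2 ^ 2 < δ ^ 2} →
      ∀ C : ℝ → ℝ,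
        (∀ b : ℝ, C b = ∫ y in E,
          (y.1 - b) / ((b - y.1) ^ 2 + y.2 ^ 2) ^ (1 + α / 2)) →
        (∀ a : ℝ, δ < a → DifferentiableAt ℝ C a ∧ DifferentiableAt ℝ (deriv C) a) ∧
        (∀ a : ℝ, 2 * δ ≤ a → |deriv (deriv C) a| ≤ Cα * δ ^ 2 / a ^ (3 + α)) := by
  set p := 1 + α / 2 with hp
  refine ⟨24 * (|p| + 1) ^ 2 * 4 ^ |-p - 1 / 2|, by positivity, fun δ hδ E hE C hC ↦ ?_⟩
  have hEdisk : E ⊆ closedDisk δ := hE.trans (ofPred_subset_ofPred.2 fun _ ↦ le_of_lt)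
  have hvol : volume E ≤ ENNReal.ofReal (4 * δ ^ 2) :=
    (measure_mono hEdisk).trans (volume_closedDisk_le hδ.le)
  have : IsFiniteMeasure (volume.restrict E) := ⟨by simpa using hvol.trans_lt ENNReal.ofReal_lt_top⟩
  have hmass : (volume.restrict E).real univ ≤ 4 * δ ^ 2 := by
    simpa [Measure.real] using ENNReal.toReal_le_of_le_ofReal (by positivity) hvol
  have hμ : ∀ᵐ y ∂volume.restrict E, y ∈ closedDisk δ :=
    ae_mono (Measure.restrict_mono_set volume hEdisk)
      (ae_restrict_mem isClosed_closedDisk.measurableSet)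
  have hCpot : C = axisPotential (axialKernel p) (volume.restrict E) := by
    simp only [funext_iff, hC, axisPotential, axialKernel_sub, implies_true]
  rw [hCpot, show 3 + α = 2 * p + 1 by rw [hp]; ring]
  refine ⟨fun a ha ↦ ?_, fun a ha ↦ ?_⟩
  · have haδ : (a, 0) ∉ closedDisk δ := notMem_closedDisk_of_lt hδ.le ha
    have hK := isCompact_closedDisk hδ.le
    exact ⟨(hasDerivAt_axisPotential_axialKernel p hK hμ haδ).differentiableAt,
      (hasDerivAt_deriv_axisPotential_axialKernel p hK hμ haδ).differentiableAt⟩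
  have ha0 : 0 < a := by linarith
  calc |deriv (deriv (axisPotential (axialKernel p) (volume.restrict E))) a|
      ≤ 6 * (|p| + 1) ^ 2 * 4 ^ |-p - 1 / 2| * (volume.restrict E).real univ / a ^ (2 * p + 1) :=
        abs_deriv_deriv_axisPotential_axialKernel_le p hδ hμ ha
    _ ≤ 6 * (|p| + 1) ^ 2 * 4 ^ |-p - 1 / 2| * (4 * δ ^ 2) / a ^ (2 * p + 1) := by gcongr
    _ = 24 * (|p| + 1) ^ 2 * 4 ^ |-p - 1 / 2| * δ ^ 2 / a ^ (2 * p + 1) := by ring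

theorem stmt12 (α : ℝ) (hα0 : 0 ≤ α) (hα2 : α < 2) :
    ∃ Cα : ℝ, 0 < Cα ∧ ∀ δ : ℝ, 0 < δ → ∀ E : Set (ℝ × ℝ),
      MeasurableSet E →
      E ⊆ {y : ℝ × ℝ | y.1 ^ 2 + y.2 ^ 2 < δ ^ 2} →
      ∀ C : ℝ → ℝ,
        (∀ b : ℝ, C b = ∫ y in E,
          (y.1 - b) / ((b - y.1) ^ 2 + y.2 ^ 2) ^ (1 + α / 2)) →
        (∀ a : ℝ, δ < a → DifferentiableAt ℝ C a ∧ DifferentiableAt ℝ (deriv C) a) ∧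
        (∀ a : ℝ, 2 * δ ≤ a → |deriv (deriv C) a| ≤ Cα * δ ^ 2 / a ^ (3 + α)) := by
  obtain ⟨Cα, hCα, h⟩ := stmt12_general α
  exact ⟨Cα, hCα, fun δ hδ E _ ↦ h δ hδ E⟩
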